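/- Let S be a nonzero complex number, and let m ≥ 1 and ξ ≥ 1 be integers with ξ ∣ m. Summing over all partitions λ of m all of whose parts are divisible by ξ, and writing c_j(λ) for the multiplicity of j as a part of λ, one has m! · ∑_λ ( ∏_{j≥1} c_j(λ)! · j^{c_j(λ)} )^{−1} · S^{(∑_{j≥1} c_j(λ)) − 1} = (m−1)! · binom( S/ξ + m/ξ − 1, m/ξ − 1 ). -/

import Mathlib

/-- The generalized binomial coefficient `x(x−1)⋯(x−n+1)/n!`. -/
noncomputable def genBinom (x : ℂ) (n : ℕ) : ℂ :=
  (∏ i ∈ Finset.range n, (x - (i : ℂ))) / (Nat.factorial n : ℂ)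

/-!
Weight a partition `λ` by `S ^ ℓ(λ) / z_λ`, where `ℓ` counts parts and `z_λ = ∏ c_j! j ^ c_j`.
Adding a part `j` to `μ` multiplies `z_μ` by `j` times the new multiplicity of `j`, so writing
`m = ∑ j c_j(λ)` and removing one marked part gives
`m ∑_{λ ⊢ m} S ^ (ℓ(λ) - 1) / z_λ = ∑_j ∑_{μ ⊢ m - j} S ^ ℓ(μ) / z_μ`.
For parts divisible by `ξ` and `m = ξ k` the right-hand side is the partial sum
`H_k = Z_0 + ⋯ + Z_{k-1}` of the total weights `Z_i` of the partitions of `ξ i`. Multiplying by `S`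
turns the left-hand side into `ξ k Z_k`, so `H_{k+1} = H_k (S / ξ + k) / k`, whence
`H_{k+1} = binom(S / ξ + k, k)`.
-/

open Finset Nat.Partition
open scoped Nat

/-- The number `z_λ = ∏ c_j! j ^ c_j` attached to a multiset of parts, which is the order of the
centralizer of a permutation with these cycle lengths (fixed points included). The factor
`∏ j ^ c_j` is encoded as the product of the multiset. -/
def centralizerOrder (s : Multiset ℕ) : ℕ :=
  s.prod * ∏ j ∈ s.toFinset, (s.count j)!

lemma prod_factorial_count_of_subset {s : Multiset ℕ} {t : Finset ℕ} (h : s.toFinset ⊆ t) :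
    ∏ j ∈ s.toFinset, (s.count j)! = ∏ j ∈ t, (s.count j)! := by
  refine prod_subset h fun j _ hj ↦ ?_
  rw [Multiset.count_eq_zero.2 (mt Multiset.mem_toFinset.2 hj), Nat.factorial_zero]

lemma centralizerOrder_eq_prod_of_subset {s : Multiset ℕ} {t : Finset ℕ} (h : s.toFinset ⊆ t) :
    centralizerOrder s = ∏ j ∈ t, (s.count j)! * j ^ s.count j := by
  rw [centralizerOrder, prod_factorial_count_of_subset h, prod_multiset_count_of_subset s t h,
    prod_mul_distrib, mul_comm]

lemma centralizerOrder_cons (a : ℕ) (s : Multiset ℕ) :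
    centralizerOrder (a ::ₘ s) = (a ::ₘ s).count a * a * centralizerOrder s := by
  have factorial_count_cons (j : ℕ) :
      ((a ::ₘ s).count j)! = (if a = j then s.count a + 1 else 1) * (s.count j)! := by
    obtain rfl | hj := eq_or_ne a j
    · rw [Multiset.count_cons_self, Nat.factorial_succ, if_pos rfl]
    · rw [Multiset.count_cons_of_ne hj.symm, if_neg hj, one_mul]
  have prod_factorial_cons : ∏ j ∈ (a ::ₘ s).toFinset, ((a ::ₘ s).count j)! =
      (s.count a + 1) * ∏ j ∈ s.toFinset, (s.count j)! := by
    rw [prod_factorial_count_of_subset (subset_insert a s.toFinset), s.toFinset_cons a]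
    simp only [factorial_count_cons, prod_mul_distrib, prod_ite_eq, mem_insert_self, if_true]
  rw [centralizerOrder, centralizerOrder, prod_factorial_cons, Multiset.prod_cons,
    Multiset.count_cons_self]
  ring

section Restricted

variable {P : ℕ → Prop} [DecidablePred P] {n : ℕ}

lemma mem_restricted {p : n.Partition} : p ∈ restricted n P ↔ ∀ j ∈ p.parts, P j := by
  simp [restricted]

lemma sum_count_mul_of_mem_restricted {p : n.Partition} (hp : p ∈ restricted n P) :
    ∑ j ∈ Icc 1 n with P j, p.parts.count j * j = n := by
  have hsub : p.parts.toFinset ⊆ {j ∈ Icc 1 n | P j} := fun j hj ↦ by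
    rw [Multiset.mem_toFinset] at hj
    simpa using ⟨⟨p.parts_pos hj, le_of_mem_parts hj⟩, mem_restricted.1 hp j hj⟩
  simpa [p.parts_sum] using (sum_multiset_count_of_subset p.parts _ hsub).symm

variable {K : Type*} [Field K] [CharZero K] (f : Multiset ℕ → K)

lemma sum_restricted_count_mul_div_centralizerOrder {j : ℕ} (hj : 1 ≤ j) (hjn : j ≤ n)
    (hPj : P j) :
    ∑ p ∈ restricted n P, (p.parts.count j * j : K) * (f p.parts / centralizerOrder p.parts) =
      ∑ q ∈ restricted (n - j) P, f (j ::ₘ q.parts) / centralizerOrder q.parts := by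
  let withPart := partitionWithPartEquiv hj hjn
  refine (sum_of_injOn (fun q ↦ (withPart.symm q).1)
    (Subtype.val_injective.comp withPart.symm.injective).injOn ?_ ?_ ?_).symm
  · intro q hq
    simpa [withPart, mem_restricted, hPj] using mem_restricted.1 hq
  · intro p hp hp_not_mem
    have hj_not_mem : j ∉ p.parts := fun hjp ↦ hp_not_mem
      ⟨withPart ⟨p, hjp⟩, mem_restricted.2 fun i hi ↦ mem_restricted.1 hp i <|
        Multiset.mem_of_mem_erase (by simpa [withPart] using hi), by simp⟩
    simp [Multiset.count_eq_zero.2 hj_not_mem]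
  · intro q _
    have hne : (((j ::ₘ q.parts).count j * j : ℕ) : K) ≠ 0 :=
      Nat.cast_ne_zero.2 (Nat.mul_ne_zero (by simp) (by omega))
    simp only [withPart, partitionWithPartEquiv_symm_apply_parts]
    rw [centralizerOrder_cons, Nat.cast_mul, ← Nat.cast_mul, ← mul_div_assoc,
      mul_div_mul_left _ _ hne]

lemma mul_sum_restricted_div_centralizerOrder :
    (n : K) * ∑ p ∈ restricted n P, f p.parts / centralizerOrder p.parts =
      ∑ j ∈ Icc 1 n with P j,
        ∑ q ∈ restricted (n - j) P, f (j ::ₘ q.parts) / centralizerOrder q.parts := by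
  calc
    _ = ∑ p ∈ restricted n P, ∑ j ∈ Icc 1 n with P j,
          (p.parts.count j * j : K) * (f p.parts / centralizerOrder p.parts) := by
      rw [mul_sum]
      refine sum_congr rfl fun p hp ↦ ?_
      rw [← sum_mul]
      congr 1
      exact_mod_cast (sum_count_mul_of_mem_restricted hp).symm
    _ = _ := by
      rw [sum_comm]
      refine sum_congr rfl fun j hj ↦ ?_
      obtain ⟨hj, hPj⟩ := mem_filter.1 hj
      obtain ⟨hj, hjn⟩ := mem_Icc.1 hj
      exact sum_restricted_count_mul_div_centralizerOrder f hj hjn hPj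

end Restricted

lemma sum_Icc_filter_dvd_sub {M : Type*} [AddCommMonoid M] (F : ℕ → M) {ξ : ℕ} (hξ : 0 < ξ)
    (k : ℕ) : ∑ j ∈ Icc 1 (ξ * k) with ξ ∣ j, F (ξ * k - j) = ∑ i ∈ range k, F (ξ * i) := by
  symm
  refine sum_nbij' (fun i ↦ ξ * (k - i)) (fun j ↦ k - j / ξ) ?_ ?_ ?_ ?_ ?_
  · intro i hi
    have hki : 0 < k - i := Nat.sub_pos_of_lt (mem_range.1 hi)
    simpa using ⟨Nat.mul_pos hξ hki, Nat.mul_le_mul_left ξ (Nat.sub_le k i)⟩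
  · intro j hj
    obtain ⟨hj, hdvd⟩ := mem_filter.1 hj
    obtain ⟨hj, hjk⟩ := mem_Icc.1 hj
    have hpos : 0 < j / ξ := Nat.div_pos (Nat.le_of_dvd hj hdvd) hξ
    have hle : j / ξ ≤ k := Nat.div_le_of_le_mul hjk
    exact mem_range.2 (by omega)
  · intro i hi
    rw [Nat.mul_div_cancel_left _ hξ, Nat.sub_sub_self (mem_range.1 hi).le]
  · intro j hj
    obtain ⟨hj, hdvd⟩ := mem_filter.1 hj
    rw [Nat.sub_sub_self (Nat.div_le_of_le_mul (mem_Icc.1 hj).2), Nat.mul_div_cancel' hdvd]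
  · intro i hi
    rw [← Nat.mul_sub, Nat.sub_sub_self (mem_range.1 hi).le]

section Divisible

variable {K : Type*} [Field K] (S : K) (ξ : ℕ)

/-- The total weight `∑ S ^ ℓ(λ) / z_λ` of the partitions `λ` of `n` with all parts divisible by
`ξ`, where `ℓ(λ)` is the number of parts. -/
def partitionWeight (n : ℕ) : K :=
  ∑ p ∈ restricted n (ξ ∣ ·), S ^ p.parts.card / centralizerOrder p.parts

/-- The variant `∑ S ^ (ℓ(λ) - 1) / z_λ` of `partitionWeight`, with one factor `S` fewer. For
`n = 0` the truncated subtraction makes it `1`. -/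
def reducedPartitionWeight (n : ℕ) : K :=
  ∑ p ∈ restricted n (ξ ∣ ·), S ^ (p.parts.card - 1) / centralizerOrder p.parts

lemma partitionWeight_zero : partitionWeight S ξ 0 = 1 := by
  simp [partitionWeight, restricted, centralizerOrder]

lemma partitionWeight_eq_mul {n : ℕ} (hn : n ≠ 0) :
    partitionWeight S ξ n = S * reducedPartitionWeight S ξ n := by
  rw [partitionWeight, reducedPartitionWeight, mul_sum]
  refine sum_congr rfl fun p _ ↦ ?_
  have hp : p.parts.card ≠ 0 := fun h ↦ hn <| by
    rw [← p.parts_sum, Multiset.card_eq_zero.1 h, Multiset.sum_zero]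
  rw [← mul_div_assoc, mul_pow_sub_one hp]

lemma sum_inv_prod_mul_pow_eq_reducedPartitionWeight (n : ℕ) :
    ∑ p : n.Partition with ∀ j ∈ p.parts, ξ ∣ j,
        (∏ j ∈ range (n + 1), ((p.parts.count j)! * (j : K) ^ p.parts.count j))⁻¹ *
          S ^ (p.parts.card - 1) =
      reducedPartitionWeight S ξ n := by
  refine sum_congr rfl fun p _ ↦ ?_
  have hsub : p.parts.toFinset ⊆ range (n + 1) := fun j hj ↦
    mem_range_succ_iff.2 (le_of_mem_parts (Multiset.mem_toFinset.1 hj))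
  rw [centralizerOrder_eq_prod_of_subset hsub, div_eq_inv_mul]
  push_cast
  rfl

variable [CharZero K] {ξ}

lemma mul_reducedPartitionWeight (hξ : 0 < ξ) (k : ℕ) :
    ((ξ * k : ℕ) : K) * reducedPartitionWeight S ξ (ξ * k) =
      ∑ i ∈ range k, partitionWeight S ξ (ξ * i) := by
  rw [← sum_Icc_filter_dvd_sub _ hξ, reducedPartitionWeight,
    mul_sum_restricted_div_centralizerOrder fun s ↦ S ^ (s.card - 1)]
  simp only [Multiset.card_cons, Nat.add_sub_cancel, partitionWeight]

lemma sum_range_partitionWeight (hξ : 0 < ξ) (k : ℕ) :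
    ∑ i ∈ range (k + 1), partitionWeight S ξ (ξ * i) = Ring.choose (S / ξ + k) k := by
  induction k with
  | zero => simp [partitionWeight_zero]
  | succ k ih =>
    have hξk : ((ξ * (k + 1) : ℕ) : K) ≠ 0 := Nat.cast_ne_zero.2 (by positivity)
    have weight_rec : ((ξ * (k + 1) : ℕ) : K) * partitionWeight S ξ (ξ * (k + 1)) =
        S * Ring.choose (S / ξ + k) k := by
      rw [partitionWeight_eq_mul S ξ (by positivity), mul_left_comm,
        mul_reducedPartitionWeight S hξ, ih]
    have choose_rec : ((k + 1 : ℕ) : K) * Ring.choose (S / ξ + k + 1) (k + 1) =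
        (S / ξ + k + 1) * Ring.choose (S / ξ + k) k := by
      simpa using Ring.choose_add_smul_choose (S / ξ + k : K) k 1
    have hξ_ne : (ξ : K) ≠ 0 := Nat.cast_ne_zero.2 hξ.ne'
    rw [sum_range_succ, ih]
    apply mul_left_cancel₀ hξk
    push_cast at weight_rec choose_rec ⊢
    calc
      _ = (ξ * (k + 1) + S) * Ring.choose (S / ξ + k) k := by rw [mul_add, weight_rec, add_mul]
      _ = ξ * ((S / ξ + k + 1) * Ring.choose (S / ξ + k) k) := by field_simp; ring
      _ = _ := by rw [← choose_rec, add_assoc, mul_assoc]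

end Divisible

lemma genBinom_eq_choose (x : ℂ) (n : ℕ) : genBinom x n = Ring.choose x n := by
  rw [genBinom, Ring.choose_eq_smul, ← descPochhammer_eval_eq_prod_range,
    ← descPochhammer_map (algebraMap ℤ ℂ), Polynomial.eval_map_algebraMap,
    Polynomial.aeval_eq_smeval, smul_eq_mul, div_eq_inv_mul]

theorem stmt_11_general {K : Type*} [Field K] [CharZero K] (S : K) {m ξ : ℕ} (hm : 1 ≤ m)
    (hdvd : ξ ∣ m) :
    (m ! : K) * ∑ p : m.Partition with ∀ j ∈ p.parts, ξ ∣ j,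
        (∏ j ∈ range (m + 1), ((p.parts.count j)! * (j : K) ^ p.parts.count j))⁻¹ *
          S ^ (p.parts.card - 1) =
      (m - 1)! * Ring.choose (S / ξ + (m / ξ : ℕ) - 1) (m / ξ - 1) := by
  have hξ : 0 < ξ := Nat.pos_of_dvd_of_pos hdvd hm
  obtain ⟨l, rfl⟩ := hdvd
  obtain ⟨k, rfl⟩ := Nat.exists_eq_add_one.2 (Nat.pos_of_mul_pos_left hm)
  calc
    _ = ((ξ * (k + 1))! : K) * reducedPartitionWeight S ξ (ξ * (k + 1)) := by
      rw [sum_inv_prod_mul_pow_eq_reducedPartitionWeight]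
    _ = (ξ * (k + 1) - 1)! *
          (((ξ * (k + 1) : ℕ) : K) * reducedPartitionWeight S ξ (ξ * (k + 1))) := by
      rw [← Nat.mul_factorial_pred (Nat.one_le_iff_ne_zero.1 hm), Nat.cast_mul]
      ring
    _ = (ξ * (k + 1) - 1)! * Ring.choose (S / ξ + k) k := by
      rw [mul_reducedPartitionWeight S hξ, sum_range_partitionWeight S hξ]
    _ = _ := by
      rw [Nat.mul_div_cancel_left _ hξ, Nat.cast_succ, ← add_assoc, add_sub_cancel_right,
        Nat.add_sub_cancel]

open scoped Classical in
/-- The unnumbered lemma in the proof of Théorème 5.3: summing over partitions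
of `m` all of whose parts are divisible by `ξ`, with `c_j` the multiplicity of
the part `j`,
`m! · ∑ (∏_j c_j!·j^{c_j})⁻¹ · S^{(∑ c_j)−1} = (m−1)! · binom(S/ξ + m/ξ − 1, m/ξ − 1)`. -/
theorem stmt_11 (S : ℂ) (hS : S ≠ 0) (m ξ : ℕ) (hm : 1 ≤ m) (hξ : 1 ≤ ξ)
    (hdvd : ξ ∣ m) :
    (m.factorial : ℂ) *
        ∑ p ∈ Finset.univ.filter (fun p : Nat.Partition m => ∀ j ∈ p.parts, ξ ∣ j),
          (∏ j ∈ Finset.range (m + 1),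
              (((p.parts.count j).factorial : ℂ) * (j : ℂ) ^ (p.parts.count j)))⁻¹ *
            S ^ (Multiset.card p.parts - 1)
      = ((m - 1).factorial : ℂ) *
          genBinom (S / (ξ : ℂ) + ((m / ξ : ℕ) : ℂ) - 1) (m / ξ - 1) := by
  rw [genBinom_eq_choose]
  exact stmt_11_general S hm hdvd
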